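/- The intersection of the Markov spectrum M with the open interval (8√1785/111, (89042158285+148687392√1785)/31262231449) consists of exactly one point, namely 5√2059061/2353, which is therefore an isolated point of M. Moreover, both endpoints 8√1785/111 and (89042158285+148687392√1785)/31262231449 belong to M. -/

import Mathlib

open Filter Set MeasureTheory
open scoped ENNReal

/-- Finite continued fraction `[a 0; a 1, ..., a n]`. -/
noncomputable def cfConv : (ℕ → ℝ) → ℕ → ℝ
  | a, 0 => a 0
  | a, n + 1 => a 0 + 1 / cfConv (fun i => a (i + 1)) n

/-- Value of the infinite continued fraction `[a 0; a 1, a 2, ...]`,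
as the limit of its convergents. -/
noncomputable def cfVal (a : ℕ → ℝ) : ℝ := limUnder atTop (cfConv a)

/-- `λ_k(α) = [α_k; α_{k+1}, ...] + [0; α_{k-1}, α_{k-2}, ...]`. -/
noncomputable def lambdaVal (α : ℤ → ℕ) (k : ℤ) : ℝ :=
  cfVal (fun n => (α (k + n) : ℝ)) +
  cfVal (fun n => if n = 0 then 0 else (α (k - n) : ℝ))

/-- The Markov value `m(α) = sup_{k ∈ ℤ} λ_k(α)`. -/
noncomputable def markovValue (α : ℤ → ℕ) : ℝ := ⨆ k : ℤ, lambdaVal α k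

/-- The Markov spectrum. -/
def markovSpectrum : Set ℝ :=
  { x | ∃ α : ℤ → ℕ, (∀ n, 0 < α n) ∧ BddAbove (range (lambdaVal α)) ∧
      markovValue α = x }

/-- The dimension function `d(t) = dim_H (M ∩ (-∞, t))`. -/
noncomputable def dimFun (t : ℝ) : ℝ≥0∞ := dimH (markovSpectrum ∩ Iio t)

/-! ### Infinite continued fractions -/

theorem one_le_cfConv (n : ℕ) : ∀ a : ℕ → ℝ, (∀ i, 1 ≤ a i) → 1 ≤ cfConv a n := by
  induction n with
  | zero => intro a ha; exact ha 0
  | succ n ih =>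
    intro a ha
    have h := ih (fun i => a (i + 1)) fun i => ha (i + 1)
    have h0 := ha 0
    have : 0 < 1 / cfConv (fun i => a (i + 1)) n := by positivity
    rw [cfConv]
    linarith

theorem abs_cfConv_sub_le (k m n : ℕ) : ∀ a : ℕ → ℝ, (∀ i, 1 ≤ a i) →
    |cfConv a (m + (2 * k + 1)) - cfConv a (n + (2 * k + 1))| ≤ (1 / 4 : ℝ) ^ k := by
  induction k with
  | zero =>
    intro a ha
    have hx := one_le_cfConv m (fun i => a (i + 1)) fun i => ha (i + 1)
    have hy := one_le_cfConv n (fun i => a (i + 1)) fun i => ha (i + 1)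
    simp only [cfConv, pow_zero]
    generalize cfConv (fun i => a (i + 1)) m = x at *
    generalize cfConv (fun i => a (i + 1)) n = y at *
    have h1 : 1 / x ≤ 1 := by rw [div_le_one (by linarith)]; exact hx
    have h2 : 1 / y ≤ 1 := by rw [div_le_one (by linarith)]; exact hy
    have h3 : 0 < 1 / x := by positivity
    have h4 : 0 < 1 / y := by positivity
    rw [abs_le]
    constructor <;> linarith
  | succ k ih =>
    intro a ha
    have ha2 : ∀ i, 1 ≤ a (i + 1 + 1) := fun i => ha (i + 1 + 1)
    have hx := one_le_cfConv (m + (2 * k + 1)) _ ha2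
    have hy := one_le_cfConv (n + (2 * k + 1)) _ ha2
    have hd := ih _ ha2
    have h1 := ha 1
    rw [show m + (2 * (k + 1) + 1) = m + (2 * k + 1) + 1 + 1 by ring,
      show n + (2 * (k + 1) + 1) = n + (2 * k + 1) + 1 + 1 by ring]
    clear ih
    generalize m + (2 * k + 1) = p at *
    generalize n + (2 * k + 1) = q at *
    simp only [cfConv, zero_add]
    generalize cfConv (fun i => a (i + 1 + 1)) p = x at *
    generalize cfConv (fun i => a (i + 1 + 1)) q = y at *
    have hX : 2 ≤ a 1 * x + 1 := by nlinarith
    have hY : 2 ≤ a 1 * y + 1 := by nlinarith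
    have hx0 : 0 < x := by linarith
    have hy0 : 0 < y := by linarith
    have e : a 0 + 1 / (a 1 + 1 / x) - (a 0 + 1 / (a 1 + 1 / y))
        = (x - y) / ((a 1 * x + 1) * (a 1 * y + 1)) := by
      have : a 1 + 1 / x ≠ 0 := by positivity
      have : a 1 + 1 / y ≠ 0 := by positivity
      have : a 1 * x + 1 ≠ 0 := by positivity
      have : a 1 * y + 1 ≠ 0 := by positivity
      field_simp
      ring
    rw [e, abs_div, abs_of_pos (by positivity : 0 < (a 1 * x + 1) * (a 1 * y + 1)),
      div_le_iff₀ (by positivity)]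
    have h4 : 4 ≤ (a 1 * x + 1) * (a 1 * y + 1) := by nlinarith
    have hp : (0 : ℝ) < (1 / 4) ^ (k + 1) := by positivity
    calc |x - y| ≤ (1 / 4) ^ k := hd
      _ = (1 / 4) ^ (k + 1) * 4 := by ring
      _ ≤ _ := by gcongr

theorem tendsto_cfConv {a : ℕ → ℝ} (ha : ∀ i, 1 ≤ a i) :
    Tendsto (cfConv a) atTop (nhds (cfVal a)) := by
  refine CauchySeq.tendsto_limUnder (Metric.cauchySeq_iff.2 fun ε hε => ?_)
  obtain ⟨k, hk⟩ := exists_pow_lt_of_lt_one hε (by norm_num : (1 / 4 : ℝ) < 1)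
  refine ⟨2 * k + 1, fun m hm n hn => ?_⟩
  obtain ⟨m, rfl⟩ := Nat.exists_eq_add_of_le' hm
  obtain ⟨n, rfl⟩ := Nat.exists_eq_add_of_le' hn
  exact (abs_cfConv_sub_le k m n a ha).trans_lt hk

theorem one_le_cfVal {a : ℕ → ℝ} (ha : ∀ i, 1 ≤ a i) : 1 ≤ cfVal a :=
  ge_of_tendsto' (tendsto_cfConv ha) fun n => one_le_cfConv n a ha

theorem cfVal_eq {a : ℕ → ℝ} (ha : ∀ i, 1 ≤ a (i + 1)) :
    cfVal a = a 0 + 1 / cfVal (fun i => a (i + 1)) := by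
  have h1 := tendsto_cfConv (a := fun i => a (i + 1)) ha
  have h2 := one_le_cfVal (a := fun i => a (i + 1)) ha
  refine Tendsto.limUnder_eq ((tendsto_add_atTop_iff_nat 1).1 ?_)
  simp only [cfConv]
  exact tendsto_const_nhds.add (tendsto_const_nhds.div h1 (by linarith))

/-! ### The two one-sided expansions attached to a bi-infinite sequence -/

/-- `[α k; α (k+1), α (k+2), …]` -/
noncomputable def rightVal (α : ℤ → ℕ) (k : ℤ) : ℝ := cfVal fun n => (α (k + n) : ℝ)

/-- `[α k; α (k-1), α (k-2), …]` -/
noncomputable def leftVal (α : ℤ → ℕ) (k : ℤ) : ℝ := cfVal fun n => (α (k - n) : ℝ)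

section OneSided

variable {α : ℤ → ℕ}

theorem one_le_rightVal (hα : ∀ n, 0 < α n) (k : ℤ) : 1 ≤ rightVal α k :=
  one_le_cfVal fun i => by exact_mod_cast hα _

theorem one_le_leftVal (hα : ∀ n, 0 < α n) (k : ℤ) : 1 ≤ leftVal α k :=
  one_le_cfVal fun i => by exact_mod_cast hα _

theorem rightVal_eq (hα : ∀ n, 0 < α n) (k : ℤ) :
    rightVal α k = α k + 1 / rightVal α (k + 1) := by
  rw [rightVal, cfVal_eq fun i => by exact_mod_cast hα _, rightVal]
  simp only [Nat.cast_add, Nat.cast_one, Nat.cast_zero, add_zero, add_comm, add_left_comm]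

theorem leftVal_eq (hα : ∀ n, 0 < α n) (k : ℤ) :
    leftVal α k = α k + 1 / leftVal α (k - 1) := by
  rw [leftVal, cfVal_eq fun i => by exact_mod_cast hα _, leftVal]
  simp only [Nat.cast_add, Nat.cast_one, Nat.cast_zero, sub_zero, sub_sub, add_comm]

theorem lambdaVal_eq (hα : ∀ n, 0 < α n) (k : ℤ) :
    lambdaVal α k = rightVal α k + 1 / leftVal α (k - 1) := by
  rw [lambdaVal, rightVal, cfVal_eq (a := fun n => if n = 0 then 0 else (α (k - n) : ℝ)), leftVal]
  · simp [sub_sub, add_comm]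
  · intro i
    simpa using (Nat.succ_le_of_lt (hα _))

theorem leftVal_eq_rightVal_neg (k : ℤ) : leftVal α k = rightVal (fun n => α (-n)) (-k) := by
  rw [leftVal, rightVal]
  congr! 3
  ring_nf

theorem lambdaVal_neg (hα : ∀ n, 0 < α n) (k : ℤ) :
    lambdaVal (fun n => α (-n)) k = lambdaVal α (-k) := by
  rw [lambdaVal_eq hα, lambdaVal_eq fun n => hα (-n), rightVal_eq hα,
    rightVal_eq fun n => hα (-n), leftVal_eq_rightVal_neg, leftVal_eq_rightVal_neg]
  simp only [neg_neg, neg_sub, sub_neg_eq_add]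
  ring_nf

end OneSided

/-! ### Finite windows of a sequence -/

/-- The sequence `α` reads `l` from position `k` to the right. -/
def ReadsRight (α : ℤ → ℕ) : ℤ → List ℕ → Prop
  | _, [] => True
  | k, a :: l => α k = a ∧ ReadsRight α (k + 1) l

/-- The sequence `α` reads `l` from position `k` to the left. -/
def ReadsLeft (α : ℤ → ℕ) : ℤ → List ℕ → Prop
  | _, [] => True
  | k, a :: l => α k = a ∧ ReadsLeft α (k - 1) l

theorem readsLeft_iff_readsRight_neg {α : ℤ → ℕ} (l : List ℕ) : ∀ k : ℤ,
    ReadsLeft α k l ↔ ReadsRight (fun n => α (-n)) (-k) l := by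
  induction l with
  | nil => intro k; rfl
  | cons a l ih =>
    intro k
    rw [ReadsLeft, ReadsRight, ih, neg_neg, neg_sub, sub_eq_neg_add]

theorem readsRight_append {α : ℤ → ℕ} (l m : List ℕ) : ∀ k : ℤ,
    ReadsRight α k (l ++ m) ↔ ReadsRight α k l ∧ ReadsRight α (k + l.length) m := by
  induction l with
  | nil => intro k; simp [ReadsRight]
  | cons a l ih =>
    intro k
    rw [List.cons_append, ReadsRight, ReadsRight, ih, and_assoc, List.length_cons]
    push_cast
    rw [add_assoc k, add_comm (1 : ℤ)]

theorem readsLeft_append {α : ℤ → ℕ} (l m : List ℕ) (k : ℤ) :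
    ReadsLeft α k (l ++ m) ↔ ReadsLeft α k l ∧ ReadsLeft α (k - l.length) m := by
  simp only [readsLeft_iff_readsRight_neg, readsRight_append, neg_sub]
  rw [sub_eq_neg_add]

theorem ReadsRight.of_prefix {α : ℤ → ℕ} {k : ℤ} {t l : List ℕ} (h : ReadsRight α k l)
    (ht : t <+: l) : ReadsRight α k t := by
  obtain ⟨m, rfl⟩ := ht
  exact ((readsRight_append t m k).1 h).1

theorem ReadsLeft.of_prefix {α : ℤ → ℕ} {k : ℤ} {t l : List ℕ} (h : ReadsLeft α k l)
    (ht : t <+: l) : ReadsLeft α k t := by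
  rw [readsLeft_iff_readsRight_neg] at *
  exact h.of_prefix ht

theorem ReadsLeft.readsRight_reverse_append {α : ℤ → ℕ} (l : List ℕ) : ∀ (k : ℤ) (r : List ℕ),
    ReadsLeft α (k - 1) l → ReadsRight α k r → ReadsRight α (k - l.length) (l.reverse ++ r) := by
  induction l with
  | nil => intro k r _ h; simpa using h
  | cons a l ih =>
    intro k r hl hr
    have := ih (k - 1) (a :: r) hl.2 ⟨hl.1, by simpa using hr⟩
    rw [List.reverse_cons, List.append_assoc, List.singleton_append, List.length_cons]
    push_cast
    rwa [add_comm, ← sub_sub]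

/-- `[l₀; l₁, …, lₘ, t]` -/
noncomputable def cfApp : List ℕ → ℝ → ℝ
  | [], t => t
  | a :: l, t => a + 1 / cfApp l t

theorem rightVal_eq_cfApp {α : ℤ → ℕ} (hα : ∀ n, 0 < α n) (l : List ℕ) : ∀ k : ℤ,
    ReadsRight α k l → rightVal α k = cfApp l (rightVal α (k + l.length)) := by
  induction l with
  | nil => intro k _; simp [cfApp]
  | cons a l ih =>
    intro k h
    rw [rightVal_eq hα, cfApp, ih _ h.2, h.1, List.length_cons]
    push_cast
    rw [add_assoc k, add_comm (1 : ℤ)]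

theorem leftVal_eq_cfApp {α : ℤ → ℕ} (hα : ∀ n, 0 < α n) {l : List ℕ} {k : ℤ}
    (h : ReadsLeft α k l) : leftVal α k = cfApp l (leftVal α (k - l.length)) := by
  rw [leftVal_eq_rightVal_neg, rightVal_eq_cfApp (fun n => hα (-n)) l (-k)
    ((readsLeft_iff_readsRight_neg l k).1 h), leftVal_eq_rightVal_neg, neg_sub, sub_eq_neg_add]

/-- Bounds for `[l₀; l₁, …, lₘ, t]` valid for all `t` whose expansion has digits `1` and `2`. -/
def cfBounds : List ℕ → ℚ × ℚ
  | [] => (15 / 11, 41 / 15)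
  | a :: l => (a + 1 / (cfBounds l).2, a + 1 / (cfBounds l).1)

theorem cfBounds_spec {t : ℝ} (h1 : 15 / 11 ≤ t) (h2 : t ≤ 41 / 15) (l : List ℕ) :
    0 < (cfBounds l).1 ∧ ((cfBounds l).1 : ℝ) ≤ cfApp l t ∧ cfApp l t ≤ (cfBounds l).2 := by
  induction l with
  | nil =>
    simp only [cfBounds, cfApp]
    norm_num
    exact ⟨h1, h2⟩
  | cons a l ih =>
    obtain ⟨h0, hl, hu⟩ := ih
    have h0' : (0 : ℝ) < (cfBounds l).1 := by exact_mod_cast h0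
    have h3 : (0 : ℚ) < (cfBounds l).2 := by
      have : (0 : ℝ) < (cfBounds l).2 := by linarith
      exact_mod_cast this
    simp only [cfBounds, cfApp]
    push_cast
    refine ⟨by positivity, ?_, ?_⟩
    · have : 0 < cfApp l t := by linarith
      gcongr
    · gcongr

section Digits

variable {α : ℤ → ℕ}

theorem pos_of_digits (h : ∀ n, α n = 1 ∨ α n = 2) (n : ℤ) : 0 < α n := by
  rcases h n with h | h <;> omega

theorem rightVal_mem (h : ∀ n, α n = 1 ∨ α n = 2) (k : ℤ) :
    15 / 11 ≤ rightVal α k ∧ rightVal α k ≤ 41 / 15 := by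
  have hd : ∀ k, (1 : ℝ) ≤ α k ∧ (α k : ℝ) ≤ 2 := fun k => by
    rcases h k with h | h <;> rw [h] <;> norm_num
  have step : ∀ c d : ℝ, 0 < c → (∀ k, c ≤ rightVal α k ∧ rightVal α k ≤ d) →
      ∀ k, 1 + 1 / d ≤ rightVal α k ∧ rightVal α k ≤ 2 + 1 / c := by
    intro c d hc H k
    obtain ⟨H1, H2⟩ := H (k + 1)
    have hd := hd k
    have h1 := one_div_le_one_div_of_le (hc.trans_le H1) H2
    have h2 := one_div_le_one_div_of_le hc H1
    rw [rightVal_eq (pos_of_digits h)]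
    constructor <;> linarith
  have h1 : ∀ k, 1 ≤ rightVal α k ∧ rightVal α k ≤ 3 := by
    intro k
    have h1 := one_le_rightVal (pos_of_digits h) (k + 1)
    have hd := hd k
    refine ⟨one_le_rightVal (pos_of_digits h) k, ?_⟩
    rw [rightVal_eq (pos_of_digits h)]
    have := (div_le_one (by linarith : 0 < rightVal α (k + 1))).2 h1
    linarith
  have h2 := step 1 3 (by norm_num) h1
  have h3 := step _ _ (by norm_num) h2
  have h4 := step _ _ (by norm_num) h3
  have := step _ _ (by norm_num) h4 k
  norm_num at this
  constructor <;> linarith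

theorem leftVal_mem (h : ∀ n, α n = 1 ∨ α n = 2) (k : ℤ) :
    15 / 11 ≤ leftVal α k ∧ leftVal α k ≤ 41 / 15 := by
  rw [leftVal_eq_rightVal_neg]
  exact rightVal_mem (fun n => h (-n)) _

/-- Lower bound for `λ_k` in terms of the digits to the left of `k` and from `k` on. -/
def lambdaLower (l r : List ℕ) : ℚ := (cfBounds r).1 + 1 / (cfBounds l).2

/-- Upper bound for `λ_k` in terms of the digits to the left of `k` and from `k` on. -/
def lambdaUpper (l r : List ℕ) : ℚ := (cfBounds r).2 + 1 / (cfBounds l).1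

theorem lambdaVal_mem (h : ∀ n, α n = 1 ∨ α n = 2) {k : ℤ} {l r : List ℕ}
    (hl : ReadsLeft α (k - 1) l) (hr : ReadsRight α k r) :
    (lambdaLower l r : ℝ) ≤ lambdaVal α k ∧ lambdaVal α k ≤ lambdaUpper l r := by
  have hp := pos_of_digits h
  rw [lambdaVal_eq hp, rightVal_eq_cfApp hp r k hr, leftVal_eq_cfApp hp hl]
  obtain ⟨R1, R2⟩ := rightVal_mem h (k + r.length)
  obtain ⟨L1, L2⟩ := leftVal_mem h (k - 1 - l.length)
  obtain ⟨_, r1, r2⟩ := cfBounds_spec R1 R2 r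
  obtain ⟨l0, l1, l2⟩ := cfBounds_spec L1 L2 l
  have l0' : (0 : ℝ) < (cfBounds l).1 := by exact_mod_cast l0
  have l3 := one_div_le_one_div_of_le l0' l1
  have l4 := one_div_le_one_div_of_le (l0'.trans_le l1) l2
  rw [lambdaLower, lambdaUpper]
  push_cast
  constructor <;> linarith

end Digits

/-! ### A search over finite windows -/

/-- Some digit `d` of the word `l.reverse ++ r`, taken in the part `r`, forces `b ≤ λ` there. -/
def exceeds (b : ℚ) : List ℕ → List ℕ → Bool
  | _, [] => false
  | l, a :: r => decide (b ≤ lambdaLower l (a :: r)) || exceeds b (a :: l) r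

/-- A window (digits `l` to the left, digits `r` to the right) needs no further extension: it
contains a target, or it is pruned, or it forces `b ≤ λ` somewhere. -/
def windowDone (b : ℚ) (prune : List ℕ → List ℕ → Bool) (T : List (List ℕ × List ℕ))
    (l r : List ℕ) : Bool :=
  T.any (fun t => t.1.isPrefixOf l && t.2.isPrefixOf r) || prune l r ||
    exceeds b [] (l.reverse ++ r)

/-- Extend a window by digits `1` and `2`, on the right for every `true` and on the left for
every `false` in the list, until every branch is done. -/
def searchWindows (b : ℚ) (prune : List ℕ → List ℕ → Bool) (T : List (List ℕ × List ℕ)) :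
    List Bool → List ℕ → List ℕ → Bool
  | [], l, r => windowDone b prune T l r
  | true :: s, l, r => windowDone b prune T l r ||
      (searchWindows b prune T s l (r ++ [1]) && searchWindows b prune T s l (r ++ [2]))
  | false :: s, l, r => windowDone b prune T l r ||
      (searchWindows b prune T s (l ++ [1]) r && searchWindows b prune T s (l ++ [2]) r)

section Search

variable {α : ℤ → ℕ} {b : ℚ}

theorem exceeds_eq_false (h : ∀ n, α n = 1 ∨ α n = 2) (hb : ∀ k, lambdaVal α k < b)
    (r : List ℕ) : ∀ (k : ℤ) (l : List ℕ), ReadsLeft α (k - 1) l → ReadsRight α k r →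
      exceeds b l r = false := by
  induction r with
  | nil => intros; rfl
  | cons a r ih =>
    intro k l hl hr
    have h1 := (lambdaVal_mem h hl hr).1.trans_lt (hb k)
    rw [exceeds, ih (k + 1) (a :: l) ⟨by simpa using hr.1, by simpa using hl⟩ hr.2, Bool.or_false,
      decide_eq_false_iff_not, not_le]
    exact_mod_cast h1

theorem exists_target_of_windowDone (h : ∀ n, α n = 1 ∨ α n = 2) (hb : ∀ k, lambdaVal α k < b)
    {k : ℤ} {prune : List ℕ → List ℕ → Bool} {T : List (List ℕ × List ℕ)}
    (hprune : ∀ l r, ReadsLeft α (k - 1) l → ReadsRight α k r → prune l r = false)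
    {l r : List ℕ} (hl : ReadsLeft α (k - 1) l) (hr : ReadsRight α k r)
    (hd : windowDone b prune T l r = true) :
    ∃ t ∈ T, ReadsLeft α (k - 1) t.1 ∧ ReadsRight α k t.2 := by
  rw [windowDone, hprune l r hl hr, exceeds_eq_false h hb _ (k - l.length) [] trivial
    (hl.readsRight_reverse_append l k r hr), Bool.or_false, Bool.or_false, List.any_eq_true] at hd
  obtain ⟨t, ht, ht'⟩ := hd
  rw [Bool.and_eq_true, List.isPrefixOf_iff_prefix, List.isPrefixOf_iff_prefix] at ht'
  exact ⟨t, ht, hl.of_prefix ht'.1, hr.of_prefix ht'.2⟩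

theorem exists_target_of_searchWindows (h : ∀ n, α n = 1 ∨ α n = 2)
    (hb : ∀ k, lambdaVal α k < b)
    {k : ℤ} {prune : List ℕ → List ℕ → Bool} {T : List (List ℕ × List ℕ)}
    (hprune : ∀ l r, ReadsLeft α (k - 1) l → ReadsRight α k r → prune l r = false)
    (s : List Bool) : ∀ l r : List ℕ, ReadsLeft α (k - 1) l → ReadsRight α k r →
      searchWindows b prune T s l r = true →
      ∃ t ∈ T, ReadsLeft α (k - 1) t.1 ∧ ReadsRight α k t.2 := by
  induction s with
  | nil => exact fun l r hl hr hs => exists_target_of_windowDone h hb hprune hl hr hs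
  | cons d s ih =>
    intro l r hl hr hs
    cases d with
    | true =>
      rw [searchWindows, Bool.or_eq_true, Bool.and_eq_true] at hs
      rcases hs with hs | ⟨hs1, hs2⟩
      · exact exists_target_of_windowDone h hb hprune hl hr hs
      · rcases h (k + r.length) with hd | hd
        · exact ih _ _ hl ((readsRight_append _ [1] _).2 ⟨hr, hd, trivial⟩) hs1
        · exact ih _ _ hl ((readsRight_append _ [2] _).2 ⟨hr, hd, trivial⟩) hs2
    | false =>
      rw [searchWindows, Bool.or_eq_true, Bool.and_eq_true] at hs
      rcases hs with hs | ⟨hs1, hs2⟩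
      · exact exists_target_of_windowDone h hb hprune hl hr hs
      · rcases h (k - 1 - l.length) with hd | hd
        · exact ih _ _ ((readsLeft_append _ [1] _).2 ⟨hl, hd, trivial⟩) hr hs1
        · exact ih _ _ ((readsLeft_append _ [2] _).2 ⟨hl, hd, trivial⟩) hr hs2

end Search

theorem searchWindows_main : searchWindows (30491775 / 10 ^ 7)
    (fun l r => decide (lambdaUpper l r ≤ 30449917 / 10 ^ 7))
    [([2, 2, 2, 2, 1, 1, 1], [2, 1, 1, 1]),
      ([1, 1, 1], [2, 2, 2, 2, 2, 1, 1, 1]),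
      ([2, 2, 1, 1, 2, 2, 2, 1, 1, 1, 2, 2, 1, 1, 1], [2, 1, 1, 1, 2, 2, 1, 1, 1]),
      ([1, 1, 1, 2, 2, 1, 1, 1], [2, 2, 2, 1, 1, 2, 2, 2, 1, 1, 1, 2, 2, 1, 1, 1])]
    (List.replicate 16 [true, false]).flatten [] [] = true := by
  decide +kernel

theorem searchWindows_tail : searchWindows (30491775 / 10 ^ 7)
    (fun _ r => decide ((cfBounds r).2 ≤ 2414387760 / 10 ^ 9))
    [([], [2, 2, 2, 2, 2, 1, 1, 1])] (List.replicate 8 true) [1, 1, 1, 2, 2, 2] [] = true := by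
  decide +kernel

theorem searchWindows_block : searchWindows (30491775 / 10 ^ 7)
    (fun _ r => decide ((cfBounds r).2 ≤ 2414387760 / 10 ^ 9))
    [([], [2, 2, 2, 2, 2, 1, 1, 1]),
      ([], [2, 2, 2, 1, 1, 2, 2, 2, 1, 1, 1, 2, 2, 1, 1, 1])] (List.replicate 16 true)
    [1, 1, 1, 2, 2, 1, 1, 1, 2, 2, 2, 1, 1, 2, 2, 2] [] = true := by
  decide +kernel

/-! ### The quadratic irrationals involved -/

/-- The value of the periodic continued fraction with period `2, 2, 2, 2, 2, 1, 1, 1`. -/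
noncomputable def tau : ℝ := 33 / 37 + 4 / 111 * Real.sqrt 1785

theorem sq_sqrt_1785 : Real.sqrt 1785 ^ 2 = 1785 := Real.sq_sqrt (by norm_num)

theorem cube_sqrt_1785 : Real.sqrt 1785 ^ 3 = 1785 * Real.sqrt 1785 := by
  linear_combination Real.sqrt 1785 * sq_sqrt_1785

theorem sqrt_1785_mem : 42.249260348 < Real.sqrt 1785 ∧ Real.sqrt 1785 < 42.249260349 :=
  ⟨Real.lt_sqrt_of_sq_lt (by norm_num), (Real.sqrt_lt' (by norm_num)).2 (by norm_num)⟩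

theorem tau_mem : 2414387760 / 10 ^ 9 < tau ∧ tau < 2414387761 / 10 ^ 9 := by
  have h := sqrt_1785_mem
  rw [tau]
  constructor <;> linarith

theorem tau_pos : 0 < tau := lt_trans (by norm_num) tau_mem.1

theorem tau_sq : 111 * tau ^ 2 = 198 * tau + 169 := by
  rw [tau]
  linear_combination (16 / 111) * sq_sqrt_1785

theorem cfApp_tau_period {t : ℝ} (ht : 0 < t) :
    cfApp [2, 2, 2, 2, 2, 1, 1, 1] t = (268 * t + 169) / (111 * t + 70) := by
  simp only [cfApp]
  push_cast
  field_simp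
  ring

theorem cfApp_sub_tau {t : ℝ} (ht : 0 < t) :
    cfApp [2, 2, 2, 2, 2, 1, 1, 1] t - tau = (t - tau) / ((111 * t + 70) * (111 * tau + 70)) := by
  have h := tau_pos
  rw [cfApp_tau_period ht, eq_div_iff (by positivity), sub_mul, div_mul_eq_mul_div,
    sub_eq_iff_eq_add, div_eq_iff (by positivity)]
  linear_combination (-(111 * t + 70)  * (111 * t + 70)) * tau_sq

theorem eq_tau_of_cfApp_eq {t : ℝ} (ht : 0 < t) (h : cfApp [2, 2, 2, 2, 2, 1, 1, 1] t = t) :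
    t = tau := by
  have h1 := cfApp_sub_tau ht
  have h2 := tau_pos
  rw [h, eq_div_iff (by positivity)] at h1
  have h3 : (t - tau) * ((111 * t + 70) * (111 * tau + 70) - 1) = 0 := by linear_combination h1
  rcases mul_eq_zero.1 h3 with h3 | h3
  · linarith
  · nlinarith [mul_pos ht h2]

theorem cfApp_left_endpoint {X Y : ℝ} (hX : 0 < X) (hY : 0 < Y) :
    cfApp [2, 1, 1, 1] X + 1 / cfApp [2, 2, 2, 2, 1, 1, 1] Y
      = (8 * X + 5) / (3 * X + 2) + (46 * Y + 29) / (111 * Y + 70) := by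
  simp only [cfApp]
  push_cast
  field_simp
  ring

theorem cfApp_left_endpoint_tau :
    cfApp [2, 1, 1, 1] tau + 1 / cfApp [2, 2, 2, 2, 1, 1, 1] tau = 8 * Real.sqrt 1785 / 111 := by
  have h := tau_pos
  rw [cfApp_left_endpoint h h, div_add_div _ _ (by positivity) (by positivity),
    div_eq_div_iff (by positivity) (by positivity), tau]
  ring_nf
  rw [sq_sqrt_1785, cube_sqrt_1785]
  ring

theorem cfApp_left_endpoint_le {X Y : ℝ} (hX : 0 < X) (hY : 0 < Y) (hX' : X ≤ tau)
    (hY' : Y ≤ tau) :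
    cfApp [2, 1, 1, 1] X + 1 / cfApp [2, 2, 2, 2, 1, 1, 1] Y ≤ 8 * Real.sqrt 1785 / 111 := by
  have h := tau_pos
  rw [← cfApp_left_endpoint_tau, cfApp_left_endpoint hX hY, cfApp_left_endpoint h h]
  apply add_le_add
  · rw [div_le_div_iff₀ (by positivity) (by positivity)]
    linarith
  · rw [div_le_div_iff₀ (by positivity) (by positivity)]
    linarith

theorem cfApp_block {X : ℝ} (hX : 0 < X) :
    cfApp [2, 1, 1, 1, 2, 2, 1, 1, 1] X = (192 * X + 121) / (73 * X + 46) := by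
  simp only [cfApp]
  push_cast
  field_simp
  ring

theorem one_div_cfApp_block {Y : ℝ} (hY : 0 < Y) :
    1 / cfApp [2, 2, 1, 1, 2, 2, 2, 1, 1, 1, 2, 2, 1, 1, 1] Y
      = (6901 * Y + 4349) / (16471 * Y + 10380) := by
  simp only [cfApp]
  push_cast
  field_simp
  ring

theorem cfApp_right_endpoint_tau :
    cfApp [2, 1, 1, 1, 2, 2, 1, 1, 1] tau
      + 1 / cfApp [2, 2, 1, 1, 2, 2, 2, 1, 1, 1, 2, 2, 1, 1, 1] tau
      = (89042158285 + 148687392 * Real.sqrt 1785) / 31262231449 := by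
  have h := tau_pos
  rw [cfApp_block h, one_div_cfApp_block h, div_add_div _ _ (by positivity) (by positivity),
    div_eq_div_iff (by positivity) (by positivity), tau]
  ring_nf
  rw [sq_sqrt_1785, cube_sqrt_1785]
  ring

theorem right_endpoint_le {X Y : ℝ} (hX : 0 < X) (hX' : X ≤ tau) (hXY : X ≤ Y) :
    (89042158285 + 148687392 * Real.sqrt 1785) / 31262231449 ≤
      cfApp [2, 1, 1, 1, 2, 2, 1, 1, 1] X
        + 1 / cfApp [2, 2, 1, 1, 2, 2, 2, 1, 1, 1, 2, 2, 1, 1, 1] Y := by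
  have h := tau_pos
  have hY : 0 < Y := hX.trans_le hXY
  rw [← cfApp_right_endpoint_tau, cfApp_block h, one_div_cfApp_block h, cfApp_block hX,
    one_div_cfApp_block hY]
  have e1 : (192 * X + 121) / (73 * X + 46) - (192 * tau + 121) / (73 * tau + 46)
      = (tau - X) / ((73 * X + 46) * (73 * tau + 46)) := by
    field_simp
    ring
  have e2 : (6901 * tau + 4349) / (16471 * tau + 10380) - (6901 * Y + 4349) / (16471 * Y + 10380)
      = (tau - Y) / ((16471 * Y + 10380) * (16471 * tau + 10380)) := by
    field_simp
    ring
  have key : (tau - Y) / ((16471 * Y + 10380) * (16471 * tau + 10380))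
      ≤ (tau - X) / ((73 * X + 46) * (73 * tau + 46)) := by
    have hX0 : 0 ≤ tau - X := by linarith
    refine (div_le_div_of_nonneg_right (by linarith : tau - Y ≤ tau - X) (by positivity)).trans ?_
    gcongr <;> norm_num
  linarith

/-- The value of the periodic continued fraction with period
`2, 2, 2, 1, 1, 2, 2, 2, 1, 1, 1, 2, 2, 1, 1, 1`. -/
noncomputable def xi : ℝ := 4209 / 4706 + 5 / 4706 * Real.sqrt 2059061

theorem sq_sqrt_2059061 : Real.sqrt 2059061 ^ 2 = 2059061 := Real.sq_sqrt (by norm_num)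

theorem cube_sqrt_2059061 : Real.sqrt 2059061 ^ 3 = 2059061 * Real.sqrt 2059061 := by
  linear_combination Real.sqrt 2059061 * sq_sqrt_2059061

theorem xi_pos : 0 < xi := by
  rw [xi]
  positivity

theorem eq_xi_of_cfApp_eq {t : ℝ} (ht : 0 < t)
    (h : cfApp [2, 2, 2, 1, 1, 2, 2, 2, 1, 1, 1, 2, 2, 1, 1, 1] t = t) : t = xi := by
  have e : cfApp [2, 2, 2, 1, 1, 2, 2, 2, 1, 1, 1, 2, 2, 1, 1, 1] t
      = (39843 * t + 25109) / (16471 * t + 10380) := by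
    simp only [cfApp]
    push_cast
    field_simp
    ring
  have hx : 2353 * xi ^ 2 = 4209 * xi + 3587 := by
    rw [xi]
    linear_combination (25 * 2353 / 4706 ^ 2) * sq_sqrt_2059061
  have hp := xi_pos
  rw [e, div_eq_iff (by positivity)] at h
  have h3 : (t - xi) * (2353 * (t + xi) - 4209) = 0 := by linear_combination (-1 / 7) * h - hx
  rcases mul_eq_zero.1 h3 with h3 | h3
  · linarith
  · have h4 : 2353 * (t * xi) = - 3587 := by
      linear_combination xi * h3 - hx
    nlinarith [mul_pos ht hp]

theorem cfApp_middle_xi :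
    cfApp [2, 1, 1, 1, 2, 2, 1, 1, 1] xi
      + 1 / cfApp [2, 2, 1, 1, 2, 2, 2, 1, 1, 1, 2, 2, 1, 1, 1] xi
      = 5 * Real.sqrt 2059061 / 2353 := by
  have h := xi_pos
  rw [cfApp_block h, one_div_cfApp_block h, div_add_div _ _ (by positivity) (by positivity),
    div_eq_div_iff (by positivity) (by positivity), xi]
  ring_nf
  rw [sq_sqrt_2059061, cube_sqrt_2059061]
  ring

/-! ### Sequences with small Markov value -/

theorem readsRight_iff {α : ℤ → ℕ} (l : List ℕ) : ∀ k : ℤ,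
    ReadsRight α k l ↔ ∀ (j : ℕ) (hj : j < l.length), α (k + j) = l[j] := by
  induction l with
  | nil => intro k; simp [ReadsRight]
  | cons a l ih =>
    intro k
    rw [ReadsRight, ih]
    have e : ∀ j : ℕ, k + 1 + (j : ℤ) = k + ((j + 1 : ℕ) : ℤ) := fun j => by push_cast; ring
    constructor
    · rintro ⟨h0, h⟩ (_ | j) hj
      · simpa using h0
      · rw [← e]
        exact h j (Nat.lt_of_succ_lt_succ hj)
    · intro h
      refine ⟨?_, fun j hj => ?_⟩
      · have := h 0 (Nat.succ_pos _)
        rwa [Nat.cast_zero, add_zero] at this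
      · rw [e]
        exact h (j + 1) (Nat.succ_lt_succ hj)

theorem ReadsRight.readsLeft_reverse {α : ℤ → ℕ} (l : List ℕ) : ∀ k : ℤ,
    ReadsRight α k l → ReadsLeft α (k + l.length - 1) l.reverse := by
  induction l with
  | nil => intro k _; trivial
  | cons a l ih =>
    intro k h
    rw [List.reverse_cons, readsLeft_append]
    refine ⟨?_, ?_, trivial⟩
    · convert ih _ h.2 using 1
      push_cast [List.length_cons]
      ring
    · rw [← h.1, List.length_cons, List.length_reverse]
      push_cast
      ring_nf

theorem ReadsRight.split {α : ℤ → ℕ} {k : ℤ} {u v : List ℕ} (h : ReadsRight α k (u ++ v)) :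
    ReadsLeft α (k + u.length - 1) u.reverse ∧ ReadsRight α (k + u.length) v :=
  ⟨(h.of_prefix ⟨v, rfl⟩).readsLeft_reverse u k, ((readsRight_append u v k).1 h).2⟩

theorem lambdaVal_eq_left {α : ℤ → ℕ} (hα : ∀ n, 0 < α n) (k : ℤ) :
    lambdaVal α k = leftVal α k + 1 / rightVal α (k + 1) := by
  rw [lambdaVal_eq hα, rightVal_eq hα, leftVal_eq hα k]
  ring

/-- The word `111 22 111 222 11 222 111 22 111`. -/
def markedWord : List ℕ :=
  [1, 1, 1, 2, 2, 1, 1, 1, 2, 2, 2, 1, 1, 2, 2, 2, 1, 1, 1, 2, 2, 1, 1, 1]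

section SmallValue

variable {α : ℤ → ℕ}

theorem not_pruned_of_tau_lt (h : ∀ n, α n = 1 ∨ α n = 2) {k : ℤ} (ht : tau < rightVal α k)
    {r : List ℕ} (hr : ReadsRight α k r) :
    decide ((cfBounds r).2 ≤ 2414387760 / 10 ^ 9) = false := by
  have hr' := rightVal_mem h (k + r.length)
  have h1 := (cfBounds_spec hr'.1 hr'.2 r).2.2
  rw [← rightVal_eq_cfApp (pos_of_digits h) r k hr] at h1
  have h2 := tau_mem.1
  have h3 : ((2414387760 / 10 ^ 9 : ℚ) : ℝ) < (cfBounds r).2 := by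
    push_cast
    linarith
  exact decide_eq_false (not_le.2 (by exact_mod_cast h3))

theorem rightVal_le_tau (h : ∀ n, α n = 1 ∨ α n = 2)
    (hb : ∀ k, lambdaVal α k < ((30491775 / 10 ^ 7 : ℚ) : ℝ)) {k : ℤ}
    (hk : ReadsLeft α (k - 1) [1, 1, 1, 2, 2, 2]) : rightVal α k ≤ tau := by
  have hp := pos_of_digits h
  have key : ∀ n : ℕ, ∀ k : ℤ, ReadsLeft α (k - 1) [1, 1, 1, 2, 2, 2] →
      rightVal α k ≤ tau + (1 / 2) ^ n := by
    intro n
    induction n with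
    | zero =>
      intro k _
      have := (rightVal_mem h k).2
      have := tau_mem.1
      norm_num at *
      linarith
    | succ n ih =>
      intro k hk
      by_contra! hlt
      have hpow : (0 : ℝ) < (1 / 2) ^ (n + 1) := by positivity
      obtain ⟨t, ht, -, hr⟩ := exists_target_of_searchWindows h hb (k := k)
        (fun _ _ _ hr => not_pruned_of_tau_lt h (by linarith) hr) _ _ [] hk trivial searchWindows_tail
      obtain rfl := List.mem_singleton.1 ht
      have hk' : ReadsLeft α (k + 8 - 1) [1, 1, 1, 2, 2, 2] := by
        have := (hr.readsLeft_reverse _ _).of_prefix (t := [1, 1, 1, 2, 2, 2]) ⟨[2, 2], rfl⟩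
        exact this
      have e := rightVal_eq_cfApp hp _ k hr
      simp only [List.length_cons, List.length_nil] at e
      norm_num at e
      have hX := one_le_rightVal hp (k + 8)
      have hX' := ih _ hk'
      have hpos : 0 < rightVal α (k + 8) := by linarith
      have hd := cfApp_sub_tau hpos
      rw [← e] at hd
      have ht := tau_pos
      have hq : (1 / 2 : ℝ) ^ (n + 1) = (1 / 2) ^ n / 2 := by ring
      have hD : 2 ≤ (111 * rightVal α (k + 8) + 70) * (111 * tau + 70) := by
        nlinarith [mul_pos hpos ht]
      have : (rightVal α (k + 8) - tau) / ((111 * rightVal α (k + 8) + 70) * (111 * tau + 70))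
          ≤ (1 / 2) ^ n / 2 := by
        have h0 : (0 : ℝ) < (1 / 2) ^ n := by positivity
        rw [div_le_div_iff₀ (by linarith) (by norm_num)]
        nlinarith
      linarith
  have hlim : Tendsto (fun n : ℕ => tau + (1 / 2 : ℝ) ^ n) atTop (nhds (tau + 0)) :=
    tendsto_const_nhds.add (tendsto_pow_atTop_nhds_zero_of_lt_one (by norm_num) (by norm_num))
  rw [add_zero] at hlim
  exact ge_of_tendsto' hlim fun n => key n k hk

theorem leftVal_le_tau (h : ∀ n, α n = 1 ∨ α n = 2)
    (hb : ∀ k, lambdaVal α k < ((30491775 / 10 ^ 7 : ℚ) : ℝ)) {k : ℤ}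
    (hk : ReadsRight α (k + 1) [1, 1, 1, 2, 2, 2]) : leftVal α k ≤ tau := by
  rw [leftVal_eq_rightVal_neg]
  refine rightVal_le_tau (fun n => h (-n)) (fun k => ?_) ?_
  · rw [lambdaVal_neg (pos_of_digits h)]
    exact hb _
  · rw [readsLeft_iff_readsRight_neg]
    simpa [add_comm] using hk

theorem lambdaVal_le_left_endpoint (h : ∀ n, α n = 1 ∨ α n = 2)
    (hb : ∀ k, lambdaVal α k < ((30491775 / 10 ^ 7 : ℚ) : ℝ)) {k : ℤ}
    (hl : ReadsLeft α (k - 1) [2, 2, 2, 2, 1, 1, 1]) (hr : ReadsRight α k [2, 1, 1, 1]) :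
    lambdaVal α k ≤ 8 * Real.sqrt 1785 / 111 := by
  have hp := pos_of_digits h
  have hw := hl.readsRight_reverse_append _ _ _ hr
  rw [lambdaVal_eq hp, rightVal_eq_cfApp hp _ k hr, leftVal_eq_cfApp hp hl]
  refine cfApp_left_endpoint_le (zero_lt_one.trans_le (one_le_rightVal hp _))
    (zero_lt_one.trans_le (one_le_leftVal hp _)) (rightVal_le_tau h hb ?_) (leftVal_le_tau h hb ?_)
  · convert (hw.readsLeft_reverse _ _).of_prefix (t := [1, 1, 1, 2, 2, 2]) ⟨[2, 2, 1, 1, 1], rfl⟩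
      using 1
    norm_num
    ring
  · convert hw.of_prefix (t := [1, 1, 1, 2, 2, 2]) ⟨[2, 2, 1, 1, 1], rfl⟩ using 1
    norm_num
    ring

theorem lambdaVal_add_fifteen (hp : ∀ n, 0 < α n) {i : ℤ} (hi : ReadsRight α i markedWord) :
    lambdaVal α (i + 15) = cfApp [2, 1, 1, 1, 2, 2, 1, 1, 1] (rightVal α (i + 24))
      + 1 / cfApp [2, 2, 1, 1, 2, 2, 2, 1, 1, 1, 2, 2, 1, 1, 1] (leftVal α (i - 1)) := by
  have hw := ReadsRight.split (u := [1, 1, 1, 2, 2, 1, 1, 1, 2, 2, 2, 1, 1, 2, 2])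
    (v := [2, 1, 1, 1, 2, 2, 1, 1, 1]) hi
  have hr : ReadsRight α (i + 15) [2, 1, 1, 1, 2, 2, 1, 1, 1] := hw.2
  have hl : ReadsLeft α (i + 15 - 1) [2, 2, 1, 1, 2, 2, 2, 1, 1, 1, 2, 2, 1, 1, 1] := hw.1
  rw [lambdaVal_eq hp, rightVal_eq_cfApp hp _ _ hr, leftVal_eq_cfApp hp hl]
  congr! 1
  · congr! 2
    push_cast [List.length_cons, List.length_nil]
    ring
  · congr! 3
    push_cast [List.length_cons, List.length_nil]
    ring

theorem lambdaVal_add_eight (hp : ∀ n, 0 < α n) {i : ℤ} (hi : ReadsRight α i markedWord) :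
    lambdaVal α (i + 8) = cfApp [2, 1, 1, 1, 2, 2, 1, 1, 1] (leftVal α (i - 1))
      + 1 / cfApp [2, 2, 1, 1, 2, 2, 2, 1, 1, 1, 2, 2, 1, 1, 1] (rightVal α (i + 24)) := by
  have hw := ReadsRight.split (u := [1, 1, 1, 2, 2, 1, 1, 1, 2])
    (v := [2, 2, 1, 1, 2, 2, 2, 1, 1, 1, 2, 2, 1, 1, 1]) hi
  have hr : ReadsRight α (i + 8 + 1) [2, 2, 1, 1, 2, 2, 2, 1, 1, 1, 2, 2, 1, 1, 1] := by
    convert hw.2 using 1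
    norm_num
    ring
  have hl : ReadsLeft α (i + 8) [2, 1, 1, 1, 2, 2, 1, 1, 1] := by
    convert hw.1 using 1
    · norm_num
      ring
    · rfl
  rw [lambdaVal_eq_left hp, rightVal_eq_cfApp hp _ _ hr, leftVal_eq_cfApp hp hl]
  congr! 1
  · congr! 2
    push_cast [List.length_cons, List.length_nil]
    ring
  · congr! 3
    push_cast [List.length_cons, List.length_nil]
    ring

theorem tau_lt_of_readsRight_markedWord (h : ∀ n, α n = 1 ∨ α n = 2)
    (hB : ∀ k, lambdaVal α k < (89042158285 + 148687392 * Real.sqrt 1785) / 31262231449) {i : ℤ}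
    (hi : ReadsRight α i markedWord) : tau < rightVal α (i + 24) ∧ tau < leftVal α (i - 1) := by
  have hp := pos_of_digits h
  have hX := one_le_rightVal hp (i + 24)
  have hY := one_le_leftVal hp (i - 1)
  have h1 := hB (i + 15)
  have h2 := hB (i + 8)
  rw [lambdaVal_add_fifteen hp hi] at h1
  rw [lambdaVal_add_eight hp hi] at h2
  generalize rightVal α (i + 24) = X at *
  generalize leftVal α (i - 1) = Y at *
  have hXY : ¬ (X ≤ tau ∧ X ≤ Y) := fun H =>
    h1.not_ge (right_endpoint_le (by linarith) H.1 H.2)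
  have hYX : ¬ (Y ≤ tau ∧ Y ≤ X) := fun H =>
    h2.not_ge (right_endpoint_le (by linarith) H.1 H.2)
  constructor <;> by_contra! H <;> rcases le_total X Y with H' | H'
  · exact hXY ⟨H, H'⟩
  · exact hYX ⟨H'.trans H, H'⟩
  · exact hXY ⟨H'.trans H, H'⟩
  · exact hYX ⟨H, H'⟩

theorem ReadsRight.markedWord_neg {i : ℤ} (hi : ReadsRight α i markedWord) :
    ReadsRight (fun n => α (-n)) (-(i + 23)) markedWord := by
  rw [← readsLeft_iff_readsRight_neg]
  convert hi.readsLeft_reverse _ _ using 1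
  · rw [markedWord]
    norm_num
    ring
  · rfl

theorem ReadsRight.markedWord_add_sixteen (h : ∀ n, α n = 1 ∨ α n = 2)
    (hb : ∀ k, lambdaVal α k < ((30491775 / 10 ^ 7 : ℚ) : ℝ)) {i : ℤ}
    (hi : ReadsRight α i markedWord) (ht : tau < rightVal α (i + 24)) :
    ReadsRight α (i + 16) markedWord := by
  have hp := pos_of_digits h
  have hl : ReadsLeft α (i + 24 - 1) [1, 1, 1, 2, 2, 1, 1, 1, 2, 2, 2, 1, 1, 2, 2, 2] :=
    (hi.readsLeft_reverse _ _).of_prefix ⟨[1, 1, 1, 2, 2, 1, 1, 1], rfl⟩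
  obtain ⟨t, hT, -, hr⟩ := exists_target_of_searchWindows h hb (k := i + 24)
    (fun _ _ _ hr => not_pruned_of_tau_lt h ht hr) _ _ [] hl trivial searchWindows_block
  simp only [List.mem_cons, List.not_mem_nil, or_false] at hT
  rcases hT with rfl | rfl
  · have hk : ReadsLeft α (i + 24 + 8 - 1) [1, 1, 1, 2, 2, 2] :=
      (hr.readsLeft_reverse _ _).of_prefix ⟨[2, 2], rfl⟩
    have hX := rightVal_le_tau h hb hk
    have hpos := zero_lt_one.trans_le (one_le_rightVal hp (i + 24 + 8))
    have hd := cfApp_sub_tau hpos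
    have e : rightVal α (i + 24) = cfApp [2, 2, 2, 2, 2, 1, 1, 1] (rightVal α (i + 24 + 8)) :=
      rightVal_eq_cfApp hp _ _ hr
    have h0 := tau_pos
    have := div_nonpos_of_nonpos_of_nonneg (sub_nonpos.2 hX)
      (by positivity : 0 ≤ (111 * rightVal α (i + 24 + 8) + 70) * (111 * tau + 70))
    linarith
  · have hs := (ReadsRight.split (u := [1, 1, 1, 2, 2, 1, 1, 1, 2, 2, 2, 1, 1, 2, 2, 2])
      (v := [1, 1, 1, 2, 2, 1, 1, 1]) hi).2
    have := (readsRight_append [1, 1, 1, 2, 2, 1, 1, 1]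
      [2, 2, 2, 1, 1, 2, 2, 2, 1, 1, 1, 2, 2, 1, 1, 1] (i + 16)).2
        ⟨hs, by convert hr using 1; norm_num; ring⟩
    exact this

theorem ReadsRight.markedWord_sub_sixteen (h : ∀ n, α n = 1 ∨ α n = 2)
    (hb : ∀ k, lambdaVal α k < ((30491775 / 10 ^ 7 : ℚ) : ℝ)) {i : ℤ}
    (hi : ReadsRight α i markedWord) (ht : tau < leftVal α (i - 1)) :
    ReadsRight α (i - 16) markedWord := by
  rw [leftVal_eq_rightVal_neg] at ht
  have := (hi.markedWord_neg.markedWord_add_sixteen (fun n => h (-n)) (fun k => by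
    rw [lambdaVal_neg (pos_of_digits h)]
    exact hb _) (by convert ht using 2; ring)).markedWord_neg
  simp only [neg_neg] at this
  convert this using 1
  ring

theorem readsRight_markedWord_add_mul (h : ∀ n, α n = 1 ∨ α n = 2)
    (hb : ∀ k, lambdaVal α k < ((30491775 / 10 ^ 7 : ℚ) : ℝ))
    (hB : ∀ k, lambdaVal α k < (89042158285 + 148687392 * Real.sqrt 1785) / 31262231449) {i : ℤ}
    (hi : ReadsRight α i markedWord) (q : ℤ) : ReadsRight α (i + 16 * q) markedWord := by
  induction q with
  | zero => simpa using hi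
  | succ q ih =>
    convert ih.markedWord_add_sixteen h hb (tau_lt_of_readsRight_markedWord h hB ih).1 using 1
    ring
  | pred q ih =>
    convert ih.markedWord_sub_sixteen h hb (tau_lt_of_readsRight_markedWord h hB ih).2 using 1
    ring

end SmallValue

/-! ### Sequences realising prescribed Markov values -/

theorem lambdaVal_comp_add {α : ℤ → ℕ} (s k : ℤ) :
    lambdaVal (fun n => α (n + s)) k = lambdaVal α (k + s) := by
  simp only [lambdaVal, add_right_comm k s, sub_add_eq_add_sub]

theorem rightVal_comp_add {α : ℤ → ℕ} (s k : ℤ) :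
    rightVal (fun n => α (n + s)) k = rightVal α (k + s) := by
  simp only [rightVal, add_right_comm k s]

theorem leftVal_of_symm {α : ℤ → ℕ} {s : ℤ} (hs : ∀ n, α (s - n) = α n) (k : ℤ) :
    leftVal α k = rightVal α (s - k) := by
  rw [leftVal_eq_rightVal_neg, sub_eq_neg_add, ← rightVal_comp_add]
  congr 1
  funext n
  rw [← hs (-n), sub_neg_eq_add, add_comm]

theorem lambdaVal_of_symm {α : ℤ → ℕ} (hα : ∀ n, 0 < α n) {s : ℤ} (hs : ∀ n, α (s - n) = α n)
    (k : ℤ) : lambdaVal α (s - k) = lambdaVal α k := by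
  rw [sub_eq_neg_add, ← lambdaVal_comp_add, ← neg_neg k, ← lambdaVal_neg hα, neg_neg]
  congr 1
  funext n
  rw [← hs (-n), sub_neg_eq_add, add_comm]

theorem markovValue_eq_of_isGreatest {α : ℤ → ℕ} {x : ℝ} (h : IsGreatest (range (lambdaVal α)) x) :
    markovValue α = x :=
  h.csSup_eq

theorem mem_markovSpectrum_of_isGreatest {α : ℤ → ℕ} (hα : ∀ n, 0 < α n) {x : ℝ}
    (h : IsGreatest (range (lambdaVal α)) x) : x ∈ markovSpectrum :=
  ⟨α, hα, h.bddAbove, markovValue_eq_of_isGreatest h⟩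

/-- Upper bound for `λ_k` in terms of `N` digits on each side. -/
def windowBound (α : ℤ → ℕ) (N : ℕ) (k : ℤ) : ℚ :=
  lambdaUpper ((List.range N).map fun j : ℕ => α (k - 1 - j)) ((List.range N).map fun j : ℕ => α (k + j))

theorem readsRight_map_range (α : ℤ → ℕ) (N : ℕ) (k : ℤ) :
    ReadsRight α k ((List.range N).map fun j : ℕ => α (k + j)) := by
  rw [readsRight_iff]
  intro j hj
  rw [List.getElem_map, List.getElem_range]

theorem readsLeft_map_range (α : ℤ → ℕ) (N : ℕ) (k : ℤ) :
    ReadsLeft α k ((List.range N).map fun j : ℕ => α (k - j)) := by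
  rw [readsLeft_iff_readsRight_neg]
  convert readsRight_map_range (fun n => α (-n)) N (-k) using 4
  ring

theorem lambdaVal_le_windowBound {α : ℤ → ℕ} (h : ∀ n, α n = 1 ∨ α n = 2) (N : ℕ) (k : ℤ) :
    lambdaVal α k ≤ windowBound α N k :=
  (lambdaVal_mem h (readsLeft_map_range α N (k - 1)) (readsRight_map_range α N k)).2

/-- The periodic sequence with period `l`, starting at position `0`. -/
def periodicSeq (l : List ℕ) (n : ℤ) : ℕ := l.getD (n % l.length).toNat 0

theorem periodicSeq_add_length (l : List ℕ) (n : ℤ) :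
    periodicSeq l (n + l.length) = periodicSeq l n := by
  rw [periodicSeq, Int.add_emod_right, periodicSeq]

theorem periodicSeq_emod_add (l : List ℕ) (n m : ℤ) :
    periodicSeq l (n + m % l.length) = periodicSeq l (n + m) := by
  rw [periodicSeq, Int.add_emod_emod, periodicSeq]

theorem periodicSeq_mem {l : List ℕ} (hl : l ≠ []) (n : ℤ) : periodicSeq l n ∈ l := by
  have h0 : (0 : ℤ) < l.length := by exact_mod_cast List.length_pos_iff.2 hl
  have h1 := Int.emod_nonneg n h0.ne'
  have h2 := Int.emod_lt_of_pos n h0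
  rw [periodicSeq, List.getD_eq_getElem _ _ (by omega)]
  exact List.getElem_mem _

theorem exists_nat_emod_length {l : List ℕ} (hl : 0 < l.length) (n : ℤ) :
    ∃ r : ℕ, n % l.length = r ∧ r < l.length := by
  have h0 : (0 : ℤ) < l.length := by exact_mod_cast hl
  have h1 := Int.emod_nonneg n h0.ne'
  have h2 := Int.emod_lt_of_pos n h0
  exact ⟨(n % l.length).toNat, by omega, by omega⟩

theorem lambdaVal_periodicSeq_emod (l : List ℕ) (k : ℤ) :
    lambdaVal (periodicSeq l) (k % l.length) = lambdaVal (periodicSeq l) k := by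
  have h (m : ℤ) : lambdaVal (periodicSeq l) m = lambdaVal (fun n => periodicSeq l (n + m)) 0 := by
    rw [lambdaVal_comp_add, zero_add]
  rw [h, h k]
  simp only [periodicSeq_emod_add]

theorem rightVal_periodicSeq_add_length (l : List ℕ) (k : ℤ) :
    rightVal (periodicSeq l) (k + l.length) = rightVal (periodicSeq l) k := by
  rw [← rightVal_comp_add]
  simp only [periodicSeq_add_length]

/-- The word `22222 111`. -/
abbrev outerPeriod : List ℕ := [2, 2, 2, 2, 2, 1, 1, 1]

/-- The word `111 22 111 222 11 222`. -/
abbrev innerPeriod : List ℕ := [1, 1, 1, 2, 2, 1, 1, 1, 2, 2, 2, 1, 1, 2, 2, 2]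

theorem periodicSeq_outerPeriod_digits (n : ℤ) :
    periodicSeq outerPeriod n = 1 ∨ periodicSeq outerPeriod n = 2 :=
  (by decide : ∀ a ∈ outerPeriod, a = 1 ∨ a = 2) _ (periodicSeq_mem (by decide) n)

theorem periodicSeq_innerPeriod_digits (n : ℤ) :
    periodicSeq innerPeriod n = 1 ∨ periodicSeq innerPeriod n = 2 :=
  (by decide : ∀ a ∈ innerPeriod, a = 1 ∨ a = 2) _ (periodicSeq_mem (by decide) n)

theorem periodicSeq_symm {l : List ℕ} {s : ℤ} (hl : 0 < l.length)
    (h : ∀ r < l.length, periodicSeq l (s - r) = periodicSeq l r) (n : ℤ) :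
    periodicSeq l (s - n) = periodicSeq l n := by
  obtain ⟨r, hr, hr'⟩ := exists_nat_emod_length hl n
  have := h r hr'
  rw [← hr, periodicSeq, Int.sub_emod_emod] at this
  rw [periodicSeq, this, periodicSeq, Int.emod_emod, periodicSeq]

theorem rightVal_outerPeriod : rightVal (periodicSeq outerPeriod) 0 = tau := by
  have hp := pos_of_digits periodicSeq_outerPeriod_digits
  refine eq_tau_of_cfApp_eq (zero_lt_one.trans_le (one_le_rightVal hp _)) ?_
  conv_lhs => rw [← rightVal_periodicSeq_add_length]
  exact (rightVal_eq_cfApp hp outerPeriod 0 ((readsRight_iff _ _).2 (by decide))).symm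

theorem isGreatest_outerPeriod :
    IsGreatest (range (lambdaVal (periodicSeq outerPeriod))) (8 * Real.sqrt 1785 / 111) := by
  have hd := periodicSeq_outerPeriod_digits
  have hp := pos_of_digits hd
  have hs : ∀ n, periodicSeq outerPeriod (4 - n) = periodicSeq outerPeriod n :=
    periodicSeq_symm (by decide) (by decide)
  have h4 : lambdaVal (periodicSeq outerPeriod) 4 = 8 * Real.sqrt 1785 / 111 := by
    have hl : ReadsLeft (periodicSeq outerPeriod) (4 - 1) [2, 2, 2, 2, 1, 1, 1] :=
      readsLeft_map_range _ 7 _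
    have hr : ReadsRight (periodicSeq outerPeriod) 4 [2, 1, 1, 1] := readsRight_map_range _ 4 _
    rw [lambdaVal_eq hp, rightVal_eq_cfApp hp _ _ hr, leftVal_eq_cfApp hp hl, leftVal_of_symm hs]
    have e : rightVal (periodicSeq outerPeriod) 8 = tau :=
      (rightVal_periodicSeq_add_length outerPeriod 0).trans rightVal_outerPeriod
    have := cfApp_left_endpoint_tau
    rw [← e] at this
    exact this
  refine ⟨⟨4, h4⟩, ?_⟩
  rintro _ ⟨k, rfl⟩
  have hw : ∀ r < 8, r ≠ 0 → r ≠ 4 →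
      windowBound (periodicSeq outerPeriod) 12 (r : ℕ) ≤ 3044 / 1000 := by
    decide +kernel
  rw [← lambdaVal_periodicSeq_emod]
  obtain ⟨r, hr, hk'⟩ := exists_nat_emod_length (l := outerPeriod) (by decide) k
  rw [hr]
  by_cases h0 : r = 4
  · subst h0
    exact h4.le
  by_cases h1 : r = 0
  · subst h1
    exact ((lambdaVal_of_symm hp hs 4).trans h4).le
  have h2 : ((windowBound (periodicSeq outerPeriod) 12 r : ℚ) : ℝ) ≤ ((3044 / 1000 : ℚ) : ℝ) :=
    Rat.cast_le.2 (hw r hk' h1 h0)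
  refine (lambdaVal_le_windowBound hd 12 r).trans (h2.trans ?_)
  have := sqrt_1785_mem.1
  norm_num at *
  linarith

theorem readsRight_innerPeriod : ReadsRight (periodicSeq innerPeriod) 0 markedWord :=
  (readsRight_iff _ _).2 (by decide)

theorem rightVal_innerPeriod : rightVal (periodicSeq innerPeriod) 24 = xi := by
  have hp := pos_of_digits periodicSeq_innerPeriod_digits
  refine eq_xi_of_cfApp_eq (zero_lt_one.trans_le (one_le_rightVal hp _)) ?_
  conv_lhs => rw [← rightVal_periodicSeq_add_length]
  exact (rightVal_eq_cfApp hp [2, 2, 2, 1, 1, 2, 2, 2, 1, 1, 1, 2, 2, 1, 1, 1] 24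
    ((readsRight_iff _ _).2 (by decide))).symm

theorem sqrt_2059061_mem : 1434.94285 < Real.sqrt 2059061 ∧ Real.sqrt 2059061 < 1434.94287 :=
  ⟨Real.lt_sqrt_of_sq_lt (by norm_num), (Real.sqrt_lt' (by norm_num)).2 (by norm_num)⟩

theorem isGreatest_innerPeriod :
    IsGreatest (range (lambdaVal (periodicSeq innerPeriod))) (5 * Real.sqrt 2059061 / 2353) := by
  have hd := periodicSeq_innerPeriod_digits
  have hp := pos_of_digits hd
  have hs : ∀ n, periodicSeq innerPeriod (23 - n) = periodicSeq innerPeriod n :=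
    periodicSeq_symm (by decide) (by decide)
  have h15 : lambdaVal (periodicSeq innerPeriod) 15 = 5 * Real.sqrt 2059061 / 2353 := by
    have := lambdaVal_add_fifteen hp readsRight_innerPeriod
    rw [leftVal_of_symm hs] at this
    norm_num [-one_div] at this
    rw [this, rightVal_innerPeriod, cfApp_middle_xi]
  refine ⟨⟨15, h15⟩, ?_⟩
  rintro _ ⟨k, rfl⟩
  have hw : ∀ r < 16, r ≠ 8 → r ≠ 15 →
      windowBound (periodicSeq innerPeriod) 12 (r : ℕ) ≤ 3049 / 1000 := by
    decide +kernel
  rw [← lambdaVal_periodicSeq_emod]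
  obtain ⟨r, hr, hk'⟩ := exists_nat_emod_length (l := innerPeriod) (by decide) k
  rw [hr]
  by_cases h0 : r = 15
  · subst h0
    exact h15.le
  by_cases h1 : r = 8
  · subst h1
    exact ((lambdaVal_of_symm hp hs 15).trans h15).le
  have h2 : ((windowBound (periodicSeq innerPeriod) 12 r : ℚ) : ℝ) ≤ ((3049 / 1000 : ℚ) : ℝ) :=
    Rat.cast_le.2 (hw r hk' h1 h0)
  refine (lambdaVal_le_windowBound hd 12 r).trans (h2.trans ?_)
  have := sqrt_2059061_mem.1
  norm_num at *
  linarith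

/-- The word `111 22 111 222 11 222 111 22 111` at positions `-12, …, 11`, continued on both
sides by repeating `22222 111`. -/
def heteroclinicSeq (n : ℤ) : ℕ :=
  if 12 ≤ n then periodicSeq outerPeriod (n - 12)
  else if n < -12 then periodicSeq outerPeriod (-13 - n)
  else markedWord.getD (n + 12).toNat 0

theorem heteroclinicSeq_of_le {n : ℤ} (hn : 12 ≤ n) :
    heteroclinicSeq n = periodicSeq outerPeriod (n - 12) :=
  if_pos hn

theorem heteroclinicSeq_digits (n : ℤ) : heteroclinicSeq n = 1 ∨ heteroclinicSeq n = 2 := by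
  rw [heteroclinicSeq]
  split_ifs with h1 h2
  · exact periodicSeq_outerPeriod_digits _
  · exact periodicSeq_outerPeriod_digits _
  · exact (by decide : ∀ j < 24, markedWord.getD j 0 = 1 ∨ markedWord.getD j 0 = 2) _ (by omega)

theorem heteroclinicSeq_symm (n : ℤ) : heteroclinicSeq (-1 - n) = heteroclinicSeq n := by
  simp only [heteroclinicSeq]
  split_ifs with h1 h2 h3 h4 h5 h6
  all_goals first
    | omega
    | (congr 1; omega)
    | skip
  obtain ⟨j, rfl⟩ : ∃ j : ℕ, n = j - 12 := ⟨(n + 12).toNat, by omega⟩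
  convert (by decide : ∀ j < 24, markedWord.getD (23 - j) 0 = markedWord.getD j 0) j (by omega)
    using 2 <;> omega

theorem rightVal_heteroclinicSeq : rightVal heteroclinicSeq 12 = tau := by
  rw [← rightVal_outerPeriod, rightVal, rightVal]
  congr 1
  funext n
  rw [heteroclinicSeq_of_le (by omega)]
  congr 2
  ring

theorem lambdaVal_heteroclinicSeq_le {k : ℤ} (hk : 0 ≤ k) (hk3 : k ≠ 3) :
    lambdaVal heteroclinicSeq k ≤ ((3049 / 1000 : ℚ) : ℝ) := by
  refine (lambdaVal_le_windowBound heteroclinicSeq_digits 12 k).trans (Rat.cast_le.2 ?_)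
  obtain ⟨j, rfl⟩ := Int.eq_ofNat_of_zero_le hk
  by_cases hj : j < 24
  · exact (by decide +kernel : ∀ j < 24, j ≠ 3 →
      windowBound heteroclinicSeq 12 (j : ℕ) ≤ 3049 / 1000) j hj (by omega)
  · obtain ⟨r, hr, hr'⟩ := exists_nat_emod_length (l := outerPeriod) (by decide) ((j : ℤ) - 12)
    have e : windowBound heteroclinicSeq 12 j = windowBound (periodicSeq outerPeriod) 12 r := by
      rw [windowBound, windowBound, ← hr]
      congr 1 <;> refine List.map_congr_left fun i hi => ?_ <;> rw [List.mem_range] at hi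
      · rw [heteroclinicSeq_of_le (by omega), sub_sub (_ % _), sub_eq_neg_add (_ % _),
          periodicSeq_emod_add]
        congr 1
        ring
      · rw [heteroclinicSeq_of_le (by omega), add_comm (_ % _), periodicSeq_emod_add]
        congr 1
        ring
    rw [e]
    exact (by decide +kernel : ∀ r < 8,
      windowBound (periodicSeq outerPeriod) 12 (r : ℕ) ≤ 3049 / 1000) r hr'

theorem isGreatest_heteroclinicSeq :
    IsGreatest (range (lambdaVal heteroclinicSeq))
      ((89042158285 + 148687392 * Real.sqrt 1785) / 31262231449) := by
  have hp := pos_of_digits heteroclinicSeq_digits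
  have h3 : lambdaVal heteroclinicSeq 3
      = (89042158285 + 148687392 * Real.sqrt 1785) / 31262231449 := by
    have := lambdaVal_add_fifteen (α := heteroclinicSeq) (i := -12) hp
      ((readsRight_iff _ _).2 (by decide))
    rw [leftVal_of_symm heteroclinicSeq_symm] at this
    norm_num [-one_div] at this
    rw [this, rightVal_heteroclinicSeq, cfApp_right_endpoint_tau]
  have hle : ∀ k : ℤ, 0 ≤ k → lambdaVal heteroclinicSeq k
      ≤ (89042158285 + 148687392 * Real.sqrt 1785) / 31262231449 := by
    intro k hk
    by_cases hk3 : k = 3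
    · rw [hk3, h3]
    · refine (lambdaVal_heteroclinicSeq_le hk hk3).trans ?_
      have := sqrt_1785_mem.1
      norm_num at *
      linarith
  refine ⟨⟨3, h3⟩, ?_⟩
  rintro _ ⟨k, rfl⟩
  rcases le_or_gt 0 k with hk | hk
  · exact hle k hk
  · rw [← lambdaVal_of_symm hp heteroclinicSeq_symm]
    exact hle _ (by omega)

/-! ### The gap -/

theorem left_endpoint_mem : 3.0449917 < 8 * Real.sqrt 1785 / 111 ∧
    8 * Real.sqrt 1785 / 111 < 3.045 := by
  have h := sqrt_1785_mem
  constructor <;> norm_num at * <;> linarith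

theorem right_endpoint_mem :
    3.0491774 < (89042158285 + 148687392 * Real.sqrt 1785) / 31262231449 ∧
      (89042158285 + 148687392 * Real.sqrt 1785) / 31262231449 < 3.0491775 := by
  have h := sqrt_1785_mem
  constructor <;> norm_num at * <;> linarith

theorem middle_point_mem : 3.049 < 5 * Real.sqrt 2059061 / 2353 ∧
    5 * Real.sqrt 2059061 / 2353 < 3.0491774 := by
  have h := sqrt_2059061_mem
  constructor <;> norm_num at * <;> linarith

theorem digits_of_lambdaVal_lt {α : ℤ → ℕ} (hα : ∀ n, 0 < α n)
    (hb : ∀ k, lambdaVal α k < 3.1) (n : ℤ) : α n = 1 ∨ α n = 2 := by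
  have h4 : ∀ k, rightVal α k < 3.1 := fun k => by
    have := hb k
    rw [lambdaVal_eq hα] at this
    have : 0 < 1 / leftVal α (k - 1) :=
      one_div_pos.2 (zero_lt_one.trans_le (one_le_leftVal hα _))
    linarith
  have h1 := h4 n
  have h2 := one_le_rightVal hα (n + 1)
  have h3 := one_div_le_one_div_of_le (by linarith) (h4 (n + 1)).le
  rw [rightVal_eq hα] at h1
  have h5 : (α n : ℝ) < 3 := by
    norm_num at h1 h3
    linarith
  have h6 : α n < 3 := by exact_mod_cast h5
  have := hα n
  omega

theorem eq_periodicSeq_of_readsRight {α : ℤ → ℕ} {i : ℤ}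
    (h : ∀ q : ℤ, ReadsRight α (i + 16 * q) markedWord) :
    α = fun n => periodicSeq innerPeriod (n + -i) := by
  funext n
  obtain ⟨r, hr, hr'⟩ := exists_nat_emod_length (l := innerPeriod) (by decide) (n + -i)
  rw [periodicSeq, hr, Int.toNat_natCast]
  have h16 : r < 16 := hr'
  have hr24 : r < markedWord.length := h16.trans (by decide)
  have e := (readsRight_iff _ _).1 (h ((n + -i) / 16)) r hr24
  have hn : i + 16 * ((n + -i) / 16) + r = n := by
    have hr : (n + -i) % 16 = r := hr
    omega
  rw [hn] at e
  rw [e, ← List.getD_eq_getElem _ 0]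
  exact (by decide : ∀ r < 16, markedWord.getD r 0 = innerPeriod.getD r 0) r h16

theorem exists_readsRight_markedWord {α : ℤ → ℕ} (h : ∀ n, α n = 1 ∨ α n = 2)
    (hb : ∀ k, lambdaVal α k < ((30491775 / 10 ^ 7 : ℚ) : ℝ)) {k : ℤ}
    (hk : 8 * Real.sqrt 1785 / 111 < lambdaVal α k) : ∃ i, ReadsRight α i markedWord := by
  have hp := pos_of_digits h
  obtain ⟨t, hT, hl, hr⟩ := exists_target_of_searchWindows h hb (k := k) (fun l r hl hr => by
    have h1 := (lambdaVal_mem h hl hr).2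
    have h2 : ((30449917 / 10 ^ 7 : ℚ) : ℝ) < lambdaUpper l r := by
      have := left_endpoint_mem.1
      norm_num at *
      linarith
    exact decide_eq_false (not_le.2 (by exact_mod_cast h2))) _ [] [] trivial trivial
    searchWindows_main
  simp only [List.mem_cons, List.not_mem_nil, or_false] at hT
  rcases hT with rfl | rfl | rfl | rfl
  · exact absurd (lambdaVal_le_left_endpoint h hb hl hr) hk.not_ge
  · have := lambdaVal_le_left_endpoint (α := fun n => α (-n)) (k := -k) (fun n => h (-n))
      (fun k => by rw [lambdaVal_neg hp]; exact hb _)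
      (by
        rw [readsLeft_iff_readsRight_neg]
        simpa [add_comm] using hr.2)
      (by
        rw [← readsLeft_iff_readsRight_neg]
        exact ⟨hr.1, hl⟩)
    rw [lambdaVal_neg hp, neg_neg] at this
    exact absurd this hk.not_ge
  · exact ⟨_, hl.readsRight_reverse_append _ _ _ hr⟩
  · exact ⟨_, hl.readsRight_reverse_append _ _ _ hr⟩

theorem markovValue_eq_of_mem_gap {α : ℤ → ℕ} (hα : ∀ n, 0 < α n)
    (hbdd : BddAbove (range (lambdaVal α)))
    (hA : 8 * Real.sqrt 1785 / 111 < markovValue α)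
    (hB : markovValue α < (89042158285 + 148687392 * Real.sqrt 1785) / 31262231449) :
    markovValue α = 5 * Real.sqrt 2059061 / 2353 := by
  have hB' : ∀ k, lambdaVal α k < (89042158285 + 148687392 * Real.sqrt 1785) / 31262231449 :=
    fun k => (le_ciSup hbdd k).trans_lt hB
  have hb : ∀ k, lambdaVal α k < ((30491775 / 10 ^ 7 : ℚ) : ℝ) := fun k => by
    refine (hB' k).trans (right_endpoint_mem.2.trans_le ?_)
    norm_num
  have h := digits_of_lambdaVal_lt hα fun k => (hb k).trans (by norm_num)
  obtain ⟨k, hk⟩ := exists_lt_of_lt_ciSup hA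
  obtain ⟨i, hi⟩ := exists_readsRight_markedWord h hb hk
  rw [eq_periodicSeq_of_readsRight (readsRight_markedWord_add_mul h hb hB' hi),
    markovValue, ← markovValue_eq_of_isGreatest isGreatest_innerPeriod, markovValue]
  simp only [lambdaVal_comp_add]
  exact (Equiv.addRight (-i)).iSup_comp (g := lambdaVal (periodicSeq innerPeriod))

/-- The intersection of the Markov spectrum with the open interval consists of
exactly one (hence isolated) point, and both endpoints belong to the Markov
spectrum. -/
theorem markov_gap_15 :
    markovSpectrum ∩ Ioo (8 * Real.sqrt 1785 / 111) ((89042158285 + 148687392 * Real.sqrt 1785) / 31262231449) = {(5 * Real.sqrt 2059061 / 2353 : ℝ)} ∧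
    (8 * Real.sqrt 1785 / 111) ∈ markovSpectrum ∧ ((89042158285 + 148687392 * Real.sqrt 1785) / 31262231449) ∈ markovSpectrum := by
  refine ⟨Subset.antisymm ?_ ?_, ?_, ?_⟩
  · rintro _ ⟨⟨α, hα, hbdd, rfl⟩, hA, hB⟩
    exact markovValue_eq_of_mem_gap hα hbdd hA hB
  · rintro _ rfl
    exact ⟨mem_markovSpectrum_of_isGreatest (pos_of_digits periodicSeq_innerPeriod_digits)
      isGreatest_innerPeriod,
      left_endpoint_mem.2.trans (lt_trans (by norm_num) middle_point_mem.1),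
      middle_point_mem.2.trans right_endpoint_mem.1⟩
  · exact mem_markovSpectrum_of_isGreatest (pos_of_digits periodicSeq_outerPeriod_digits)
      isGreatest_outerPeriod
  · exact mem_markovSpectrum_of_isGreatest (pos_of_digits heteroclinicSeq_digits)
      isGreatest_heteroclinicSeq
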